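/- For symplectic matrices M₁ ∈ Sp(2n₁) and M₂ ∈ Sp(2n₂) and any ε ∈ ℝ, M_ε(M₁ ⋄ M₂) = M_ε(M₁) ⋄_s M_ε(M₂) up to the block interleaving permutation; consequently sgn M_ε(M₁ ⋄ M₂) = sgn M_ε(M₁) + sgn M_ε(M₂). -/

import Mathlib

open Matrix BigOperators

noncomputable section

/-- The standard symplectic matrix `J = [[0, -I],[I, 0]]`. -/
def Jmat (ι : Type*) [Fintype ι] [DecidableEq ι] : Matrix (ι ⊕ ι) (ι ⊕ ι) ℝ :=
  Matrix.fromBlocks 0 (-1) 1 0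

/-- `M` is symplectic iff `Mᵀ J M = J`. -/
def IsSymplectic {ι : Type*} [Fintype ι] [DecidableEq ι]
    (M : Matrix (ι ⊕ ι) (ι ⊕ ι) ℝ) : Prop :=
  Mᵀ * Jmat ι * M = Jmat ι

/-- The matrix `M_ε(P)`. -/
def Mmat {ι : Type*} [Fintype ι] [DecidableEq ι] (ε : ℝ)
    (P : Matrix (ι ⊕ ι) (ι ⊕ ι) ℝ) : Matrix (ι ⊕ ι) (ι ⊕ ι) ℝ :=
  Pᵀ * Matrix.fromBlocks (Real.sin (2*ε) • 1) (-(Real.cos (2*ε)) • 1)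
      (-(Real.cos (2*ε)) • 1) (-(Real.sin (2*ε)) • 1) * P
    + Matrix.fromBlocks (Real.sin (2*ε) • 1) (Real.cos (2*ε) • 1)
      (Real.cos (2*ε) • 1) (-(Real.sin (2*ε)) • 1)

/-- `N = diag(-I, I)`. -/
def Nmat (ι : Type*) [Fintype ι] [DecidableEq ι] : Matrix (ι ⊕ ι) (ι ⊕ ι) ℝ :=
  Matrix.fromBlocks (-1) 0 0 1

/-- `m⁺(F)`: dimension of a maximal subspace on which the quadratic form of `F`
is positive definite. -/
def posDim {ι : Type*} [Fintype ι] (F : Matrix ι ι ℝ) : ℕ :=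
  sSup {d : ℕ | ∃ W : Submodule ℝ (ι → ℝ), Module.finrank ℝ W = d ∧
    ∀ v ∈ W, v ≠ 0 → 0 < F.mulVec v ⬝ᵥ v}

/-- `m⁻(F)`: dimension of a maximal subspace on which the quadratic form of `F`
is negative definite. -/
def negDim {ι : Type*} [Fintype ι] (F : Matrix ι ι ℝ) : ℕ :=
  sSup {d : ℕ | ∃ W : Submodule ℝ (ι → ℝ), Module.finrank ℝ W = d ∧
    ∀ v ∈ W, v ≠ 0 → F.mulVec v ⬝ᵥ v < 0}

/-- The signature `sgn F = m⁺(F) - m⁻(F)`. -/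
def signat {ι : Type*} [Fintype ι] (F : Matrix ι ι ℝ) : ℤ :=
  (posDim F : ℤ) - (negDim F : ℤ)

/-- The `⋄`-product (symplectic direct sum) of two matrices. -/
def diamond {ι₁ ι₂ : Type*}
    (M₁ : Matrix (ι₁ ⊕ ι₁) (ι₁ ⊕ ι₁) ℝ) (M₂ : Matrix (ι₂ ⊕ ι₂) (ι₂ ⊕ ι₂) ℝ) :
    Matrix ((ι₁ ⊕ ι₂) ⊕ (ι₁ ⊕ ι₂)) ((ι₁ ⊕ ι₂) ⊕ (ι₁ ⊕ ι₂)) ℝ :=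
  Matrix.fromBlocks
    (Matrix.fromBlocks (M₁.submatrix Sum.inl Sum.inl) 0 0 (M₂.submatrix Sum.inl Sum.inl))
    (Matrix.fromBlocks (M₁.submatrix Sum.inl Sum.inr) 0 0 (M₂.submatrix Sum.inl Sum.inr))
    (Matrix.fromBlocks (M₁.submatrix Sum.inr Sum.inl) 0 0 (M₂.submatrix Sum.inr Sum.inl))
    (Matrix.fromBlocks (M₁.submatrix Sum.inr Sum.inr) 0 0 (M₂.submatrix Sum.inr Sum.inr))

end

/-!
Reordering the index set turns `M₁ ⋄ M₂` into the block diagonal matrix `diag(M₁, M₂)`, so `⋄`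
respects sums, products and transposes. As `M_ε` is built from these operations and two matrices
with scalar blocks, each the `⋄`-product of its smaller copies, it commutes with `⋄`.
The quadratic form of `F₁ ⋄ F₂` is isometric to the orthogonal sum of those of `F₁` and `F₂`;
diagonalising both summands and counting positive weights, which Sylvester's law of inertia allows,
shows that `m⁺` is additive. Applied to `-F₁` and `-F₂` this gives the additivity of `m⁻`.
-/

section Diamond

variable {ι₁ ι₂ : Type*}

theorem diamond_eq_submatrix (M₁ : Matrix (ι₁ ⊕ ι₁) (ι₁ ⊕ ι₁) ℝ)
    (M₂ : Matrix (ι₂ ⊕ ι₂) (ι₂ ⊕ ι₂) ℝ) :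
    diamond M₁ M₂ = (fromBlocks M₁ 0 0 M₂).submatrix
      (Equiv.sumSumSumComm ι₁ ι₂ ι₁ ι₂) (Equiv.sumSumSumComm ι₁ ι₂ ι₁ ι₂) := by
  ext ((i | i) | (i | i)) ((j | j) | (j | j)) <;> rfl

theorem diamond_fromBlocks (A₁ B₁ C₁ D₁ : Matrix ι₁ ι₁ ℝ) (A₂ B₂ C₂ D₂ : Matrix ι₂ ι₂ ℝ) :
    diamond (fromBlocks A₁ B₁ C₁ D₁) (fromBlocks A₂ B₂ C₂ D₂) =
      fromBlocks (fromBlocks A₁ 0 0 A₂) (fromBlocks B₁ 0 0 B₂)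
        (fromBlocks C₁ 0 0 C₂) (fromBlocks D₁ 0 0 D₂) :=
  rfl

theorem diamond_fromBlocks_smul_one [DecidableEq ι₁] [DecidableEq ι₂] (a b c d : ℝ) :
    diamond (fromBlocks (a • 1) (b • 1) (c • 1) (d • 1) : Matrix (ι₁ ⊕ ι₁) (ι₁ ⊕ ι₁) ℝ)
      (fromBlocks (a • 1) (b • 1) (c • 1) (d • 1) : Matrix (ι₂ ⊕ ι₂) (ι₂ ⊕ ι₂) ℝ) =
      fromBlocks (a • 1) (b • 1) (c • 1) (d • 1) := by
  simp only [diamond_fromBlocks, ← fromBlocks_one (l := ι₁) (m := ι₂), fromBlocks_smul, smul_zero]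

theorem diamond_transpose (M₁ : Matrix (ι₁ ⊕ ι₁) (ι₁ ⊕ ι₁) ℝ)
    (M₂ : Matrix (ι₂ ⊕ ι₂) (ι₂ ⊕ ι₂) ℝ) :
    (diamond M₁ M₂)ᵀ = diamond M₁ᵀ M₂ᵀ := by
  simp [diamond_eq_submatrix, fromBlocks_transpose]

theorem diamond_neg (M₁ : Matrix (ι₁ ⊕ ι₁) (ι₁ ⊕ ι₁) ℝ) (M₂ : Matrix (ι₂ ⊕ ι₂) (ι₂ ⊕ ι₂) ℝ) :
    -diamond M₁ M₂ = diamond (-M₁) (-M₂) := by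
  simp [diamond, fromBlocks_neg, submatrix_neg]

theorem diamond_add (M₁ N₁ : Matrix (ι₁ ⊕ ι₁) (ι₁ ⊕ ι₁) ℝ)
    (M₂ N₂ : Matrix (ι₂ ⊕ ι₂) (ι₂ ⊕ ι₂) ℝ) :
    diamond M₁ M₂ + diamond N₁ N₂ = diamond (M₁ + N₁) (M₂ + N₂) := by
  simp [diamond, fromBlocks_add, submatrix_add]

theorem diamond_mul [Fintype ι₁] [Fintype ι₂] (M₁ N₁ : Matrix (ι₁ ⊕ ι₁) (ι₁ ⊕ ι₁) ℝ)
    (M₂ N₂ : Matrix (ι₂ ⊕ ι₂) (ι₂ ⊕ ι₂) ℝ) :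
    diamond M₁ M₂ * diamond N₁ N₂ = diamond (M₁ * N₁) (M₂ * N₂) := by
  simp [diamond_eq_submatrix, submatrix_mul_equiv, fromBlocks_multiply]

theorem Mmat_diamond [Fintype ι₁] [DecidableEq ι₁] [Fintype ι₂] [DecidableEq ι₂] (ε : ℝ)
    (M₁ : Matrix (ι₁ ⊕ ι₁) (ι₁ ⊕ ι₁) ℝ) (M₂ : Matrix (ι₂ ⊕ ι₂) (ι₂ ⊕ ι₂) ℝ) :
    Mmat ε (diamond M₁ M₂) = diamond (Mmat ε M₁) (Mmat ε M₂) := by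
  simp only [Mmat, ← diamond_fromBlocks_smul_one, diamond_transpose, diamond_mul, diamond_add]

end Diamond

section SigPosProd

open QuadraticMap

theorem equivalent_weightedSumSquares_sumElim {R S κ₁ κ₂ : Type*} [CommSemiring R] [Monoid S]
    [DistribMulAction S R] [SMulCommClass S R R] [Fintype κ₁] [Fintype κ₂]
    (w₁ : κ₁ → S) (w₂ : κ₂ → S) :
    (weightedSumSquares R (Sum.elim w₁ w₂)).Equivalent
      ((weightedSumSquares R w₁).prod (weightedSumSquares R w₂)) :=
  ⟨{ LinearEquiv.sumArrowLequivProdArrow κ₁ κ₂ R R with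
      map_app' := fun v => by
        simp [weightedSumSquares_apply, LinearEquiv.sumArrowLequivProdArrow,
          Equiv.sumArrowEquivProdArrow] }⟩

variable {𝕜 : Type*} [Field 𝕜] [LinearOrder 𝕜] [IsStrictOrderedRing 𝕜]

theorem sigPos_weightedSumSquares_sumElim {κ₁ κ₂ : Type*} [Fintype κ₁] [Fintype κ₂]
    (w₁ : κ₁ → 𝕜) (w₂ : κ₂ → 𝕜) :
    sigPos (weightedSumSquares 𝕜 (Sum.elim w₁ w₂)) =
      sigPos (weightedSumSquares 𝕜 w₁) + sigPos (weightedSumSquares 𝕜 w₂) := by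
  simp only [QuadraticForm.sigPos_weightedSumSquares, ← Nat.card_coe_set_eq, ← Nat.card_sum]
  exact Nat.card_congr Equiv.subtypeSum

theorem sigPos_prod {V₁ V₂ : Type*} [AddCommGroup V₁] [Module 𝕜 V₁] [FiniteDimensional 𝕜 V₁]
    [AddCommGroup V₂] [Module 𝕜 V₂] [FiniteDimensional 𝕜 V₂]
    (Q₁ : QuadraticForm 𝕜 V₁) (Q₂ : QuadraticForm 𝕜 V₂) :
    sigPos (Q₁.prod Q₂) = sigPos Q₁ + sigPos Q₂ := by
  have : Invertible (2 : 𝕜) := invertibleOfNonzero two_ne_zero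
  obtain ⟨w₁, e₁⟩ := Q₁.equivalent_weightedSumSquares
  obtain ⟨w₂, e₂⟩ := Q₂.equivalent_weightedSumSquares
  have e : (Q₁.prod Q₂).Equivalent (weightedSumSquares 𝕜 (Sum.elim w₁ w₂)) :=
    (e₁.prod e₂).trans (equivalent_weightedSumSquares_sumElim w₁ w₂).symm
  rw [e.sigPos_eq, e₁.sigPos_eq, e₂.sigPos_eq, sigPos_weightedSumSquares_sumElim]

end SigPosProd

section ToQuadraticForm

variable {R ι₁ ι₂ : Type*} [CommRing R] [Fintype ι₁] [Fintype ι₂] [DecidableEq ι₁] [DecidableEq ι₂]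

theorem toQuadraticForm'_apply (F : Matrix ι₁ ι₁ R) (v : ι₁ → R) :
    F.toQuadraticForm' v = F *ᵥ v ⬝ᵥ v := by
  rw [dotProduct_comm]
  simp [toQuadraticForm', toLinearMap₂'_apply']

theorem equivalent_toQuadraticForm'_fromBlocks (F₁ : Matrix ι₁ ι₁ R) (F₂ : Matrix ι₂ ι₂ R) :
    (fromBlocks F₁ 0 0 F₂).toQuadraticForm'.Equivalent
      (F₁.toQuadraticForm'.prod F₂.toQuadraticForm') :=
  ⟨{ LinearEquiv.sumArrowLequivProdArrow ι₁ ι₂ R R with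
      map_app' := fun v => by
        simp [toQuadraticForm'_apply, fromBlocks_mulVec, dotProduct,
          LinearEquiv.sumArrowLequivProdArrow, Equiv.sumArrowEquivProdArrow,
          Function.comp_def] }⟩

theorem equivalent_toQuadraticForm'_submatrix (F : Matrix ι₂ ι₂ R) (e : ι₁ ≃ ι₂) :
    (F.submatrix e e).toQuadraticForm'.Equivalent F.toQuadraticForm' :=
  ⟨{ LinearEquiv.funCongrLeft R R e.symm with
      map_app' := fun v => by
        simp [toQuadraticForm'_apply, submatrix_mulVec_equiv, LinearEquiv.funCongrLeft,
          LinearMap.funLeft, ← comp_equiv_symm_dotProduct] }⟩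

end ToQuadraticForm

section Signature

variable {ι₁ ι₂ : Type*} [Fintype ι₁] [Fintype ι₂]

theorem posDim_eq_sigPos [DecidableEq ι₁] (F : Matrix ι₁ ι₁ ℝ) :
    posDim F = sigPos F.toQuadraticForm' := by
  rw [posDim, ← (sigPos_isGreatest F.toQuadraticForm').csSup_eq]
  simp [QuadraticMap.PosDef, toQuadraticForm'_apply]

theorem negDim_eq_posDim_neg (F : Matrix ι₁ ι₁ ℝ) : negDim F = posDim (-F) := by
  simp [negDim, posDim, neg_mulVec]

theorem posDim_fromBlocks (F₁ : Matrix ι₁ ι₁ ℝ) (F₂ : Matrix ι₂ ι₂ ℝ) :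
    posDim (fromBlocks F₁ 0 0 F₂) = posDim F₁ + posDim F₂ := by
  classical
  simp only [posDim_eq_sigPos, (equivalent_toQuadraticForm'_fromBlocks F₁ F₂).sigPos_eq,
    sigPos_prod]

theorem posDim_submatrix (F : Matrix ι₂ ι₂ ℝ) (e : ι₁ ≃ ι₂) :
    posDim (F.submatrix e e) = posDim F := by
  classical
  simp only [posDim_eq_sigPos, (equivalent_toQuadraticForm'_submatrix F e).sigPos_eq]

theorem posDim_diamond (F₁ : Matrix (ι₁ ⊕ ι₁) (ι₁ ⊕ ι₁) ℝ) (F₂ : Matrix (ι₂ ⊕ ι₂) (ι₂ ⊕ ι₂) ℝ) :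
    posDim (diamond F₁ F₂) = posDim F₁ + posDim F₂ := by
  rw [diamond_eq_submatrix, posDim_submatrix, posDim_fromBlocks]

theorem negDim_diamond (F₁ : Matrix (ι₁ ⊕ ι₁) (ι₁ ⊕ ι₁) ℝ) (F₂ : Matrix (ι₂ ⊕ ι₂) (ι₂ ⊕ ι₂) ℝ) :
    negDim (diamond F₁ F₂) = negDim F₁ + negDim F₂ := by
  simp only [negDim_eq_posDim_neg, diamond_neg, posDim_diamond]

theorem signat_diamond (F₁ : Matrix (ι₁ ⊕ ι₁) (ι₁ ⊕ ι₁) ℝ) (F₂ : Matrix (ι₂ ⊕ ι₂) (ι₂ ⊕ ι₂) ℝ) :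
    signat (diamond F₁ F₂) = signat F₁ + signat F₂ := by
  simp only [signat, posDim_diamond, negDim_diamond, Nat.cast_add, add_sub_add_comm]

end Signature

theorem Meps_diamond_general {ι₁ ι₂ : Type*} [Fintype ι₁] [DecidableEq ι₁] [Fintype ι₂]
    [DecidableEq ι₂] (ε : ℝ) (M₁ : Matrix (ι₁ ⊕ ι₁) (ι₁ ⊕ ι₁) ℝ)
    (M₂ : Matrix (ι₂ ⊕ ι₂) (ι₂ ⊕ ι₂) ℝ) :
    Mmat ε (diamond M₁ M₂) = diamond (Mmat ε M₁) (Mmat ε M₂) ∧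
    signat (Mmat ε (diamond M₁ M₂)) = signat (Mmat ε M₁) + signat (Mmat ε M₂) :=
  ⟨Mmat_diamond ε M₁ M₂, by rw [Mmat_diamond, signat_diamond]⟩

/-- `M_ε` commutes with the `⋄`-product, and the signature is additive. -/
theorem Meps_diamond {n₁ n₂ : ℕ} (ε : ℝ)
    (M₁ : Matrix (Fin n₁ ⊕ Fin n₁) (Fin n₁ ⊕ Fin n₁) ℝ)
    (M₂ : Matrix (Fin n₂ ⊕ Fin n₂) (Fin n₂ ⊕ Fin n₂) ℝ)
    (h₁ : IsSymplectic M₁) (h₂ : IsSymplectic M₂) :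
    Mmat ε (diamond M₁ M₂) = diamond (Mmat ε M₁) (Mmat ε M₂) ∧
    signat (Mmat ε (diamond M₁ M₂)) = signat (Mmat ε M₁) + signat (Mmat ε M₂) :=
  Meps_diamond_general ε M₁ M₂
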